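/- Suppose ℓ = 2 and the induced map [φ] : H^k(C) → H^{k+2}(C) is zero for every k (the algebraic model of c(ψ) for a d-exact two-form ψ). Then for every integer k ≥ 1, b_k ≤ m_k − v_{k−1}. -/

import Mathlib

open LinearMap Module

noncomputable section

namespace ConeMorse

variable (A : ℤ → Type) [∀ i, AddCommGroup (A i)] [∀ i, Module ℝ (A i)]

/-- Transport along an equality of indices. -/
def lcast {m k : ℤ} (h : m = k) : A m →ₗ[ℝ] A k where
  toFun x := h ▸ x
  map_add' x y := by subst h; rfl
  map_smul' c x := by subst h; rfl

variable (d : ∀ i, A i →ₗ[ℝ] A (i + 1))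

/-- Cocycles in degree `i`. -/
def cocycles (i : ℤ) : Submodule ℝ (A i) := ker (d i)

/-- Coboundaries in degree `i`: the image of `d : A^{i-1} → A^i`. -/
def cobound (i : ℤ) : Submodule ℝ (A i) :=
  range ((lcast A (show i - 1 + 1 = i by ring)).comp (d (i - 1)))

/-- Cohomology in degree `i`: cocycles modulo coboundaries. -/
abbrev Hcoh (i : ℤ) :=
  cocycles A d i ⧸ Submodule.comap (cocycles A d i).subtype (cobound A d i)

section OneComplex

variable (ℓ : ℤ) (φ : ∀ i, A i →ₗ[ℝ] A (i + ℓ))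

/-- The cone differential `∂_C (a, b) = (∂ a + φ b, (−1)^{ℓ−1} ∂ b)` on
`Cone^i(φ) = A^i ⊕ A^{i−ℓ+1}`. -/
def coneD (i : ℤ) : (A i × A (i - ℓ + 1)) →ₗ[ℝ] (A (i + 1) × A (i + 1 - ℓ + 1)) :=
  LinearMap.prod
    ((d i).comp (LinearMap.fst ℝ (A i) (A (i - ℓ + 1))) +
      (lcast A (show i - ℓ + 1 + ℓ = i + 1 by ring)).comp
        ((φ (i - ℓ + 1)).comp (LinearMap.snd ℝ (A i) (A (i - ℓ + 1)))))
    (((-1 : ℝ) ^ (ℓ - 1)) •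
      ((lcast A (show i - ℓ + 1 + 1 = i + 1 - ℓ + 1 by ring)).comp
        ((d (i - ℓ + 1)).comp (LinearMap.snd ℝ (A i) (A (i - ℓ + 1))))))

variable [∀ i, FiniteDimensional ℝ (A i)]

/-- `m_k`: the dimension of the cochain group in degree `k`. -/
def mnum (k : ℤ) : ℕ := finrank ℝ (A k)

/-- `b_k`: the dimension of the cohomology in degree `k`. -/
def bnum (k : ℤ) : ℕ := finrank ℝ (Hcoh A d k)

/-- `v_k`: the rank of `φ : A^k → A^{k+ℓ}`. -/
def vnum (k : ℤ) : ℕ := finrank ℝ (range (φ k))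

/-- `r_k`: the rank of the induced map `[φ] : H^k → H^{k+ℓ}`, computed as the dimension of
`φ(Z^k)/(φ(Z^k) ∩ B^{k+ℓ})`. -/
def rnum (k : ℤ) : ℕ :=
  finrank ℝ ((Submodule.map (φ k) (cocycles A d k)) ⧸
    Submodule.comap (Submodule.map (φ k) (cocycles A d k)).subtype (cobound A d (k + ℓ)))

/-- `b^φ_k`: the dimension of the cone cohomology in degree `k`. -/
def bphi (k : ℤ) : ℕ :=
  finrank ℝ (Hcoh (fun i => A i × A (i - ℓ + 1)) (coneD A d ℓ φ) k)

end OneComplex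

end ConeMorse

open ConeMorse

/-!
Let `Z^k` and `B^k` be the cocycles and coboundaries, so that
`m_k = dim Z^k + dim B^{k+1} = b_k + dim B^k + dim B^{k+1}`. The space `φ(C^{k-1})` is spanned by
`φ(Z^{k-1})`, which lies in `B^{k+1}`, and by the image of a complement of `Z^{k-1}`, which has
dimension `dim B^k`. Hence `v_{k-1} ≤ dim B^k + dim B^{k+1} = m_k - b_k`.
-/

namespace ConeMorse

theorem finrank_range_le_finrank_map_add_finrank_quotient {K V W : Type*} [DivisionRing K]
    [AddCommGroup V] [Module K V] [FiniteDimensional K V] [AddCommGroup W] [Module K W]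
    (f : V →ₗ[K] W) (p : Submodule K V) :
    finrank K (range f) ≤ finrank K (p.map f) + finrank K (V ⧸ p) := by
  obtain ⟨q, hpq⟩ := p.exists_isCompl
  calc finrank K (range f)
      = finrank K ↥(p.map f ⊔ q.map f) := by
        rw [← Submodule.map_sup, hpq.sup_eq_top, Submodule.map_top]
    _ ≤ finrank K (p.map f) + finrank K (q.map f) :=
        Submodule.finrank_add_le_finrank_add_finrank _ _
    _ ≤ finrank K (p.map f) + finrank K q := by
        gcongr
        exact Submodule.finrank_map_le f q
    _ = finrank K (p.map f) + finrank K (V ⧸ p) := by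
        rw [(p.quotientEquivOfIsCompl q hpq).finrank_eq]

section Complex

variable {A : ℤ → Type} [∀ i, AddCommGroup (A i)] [∀ i, Module ℝ (A i)]
  (d : ∀ i, A i →ₗ[ℝ] A (i + 1))

theorem range_lcast_comp {i j : ℤ} (h : i + 1 = j + 1) :
    range ((lcast A h).comp (d i)) = range (d j) := by
  obtain rfl : i = j := by lia
  rfl

theorem cobound_add_one (i : ℤ) : cobound A d (i + 1) = range (d i) :=
  range_lcast_comp d _

theorem cobound_le_cocycles (hd : ∀ i, (d (i + 1)).comp (d i) = 0) (i : ℤ) :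
    cobound A d i ≤ cocycles A d i := by
  obtain ⟨j, rfl⟩ : ∃ j, i = j + 1 := ⟨i - 1, by ring⟩
  rw [cobound_add_one]
  exact range_le_ker_iff.mpr (hd j)

theorem finrank_quotient_cocycles (i : ℤ) :
    finrank ℝ (A i ⧸ cocycles A d i) = finrank ℝ (cobound A d (i + 1)) := by
  rw [cobound_add_one]
  exact (d i).quotKerEquivRange.finrank_eq

variable [∀ i, FiniteDimensional ℝ (A i)]

theorem bnum_add_finrank_cobound (hd : ∀ i, (d (i + 1)).comp (d i) = 0) (k : ℤ) :
    bnum A d k + finrank ℝ (cobound A d k) = finrank ℝ (cocycles A d k) := by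
  rw [← (Submodule.comapSubtypeEquivOfLe (cobound_le_cocycles d hd k)).finrank_eq]
  exact Submodule.finrank_quotient_add_finrank _

theorem mnum_eq_bnum_add_finrank_cobound (hd : ∀ i, (d (i + 1)).comp (d i) = 0) (k : ℤ) :
    mnum A k =
      bnum A d k + finrank ℝ (cobound A d k) + finrank ℝ (cobound A d (k + 1)) := by
  rw [bnum_add_finrank_cobound d hd, ← finrank_quotient_cocycles, add_comm]
  exact (Submodule.finrank_quotient_add_finrank _).symm

theorem vnum_le_finrank_cobound_add_finrank_cobound (ℓ : ℤ) (φ : ∀ i, A i →ₗ[ℝ] A (i + ℓ))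
    {k : ℤ} (hφ : Submodule.map (φ k) (cocycles A d k) ≤ cobound A d (k + ℓ)) :
    vnum A ℓ φ k ≤
      finrank ℝ (cobound A d (k + ℓ)) + finrank ℝ (cobound A d (k + 1)) :=
  calc vnum A ℓ φ k
      ≤ finrank ℝ (Submodule.map (φ k) (cocycles A d k)) +
          finrank ℝ (A k ⧸ cocycles A d k) :=
        finrank_range_le_finrank_map_add_finrank_quotient _ _
    _ ≤ finrank ℝ (cobound A d (k + ℓ)) + finrank ℝ (cobound A d (k + 1)) := by
        rw [finrank_quotient_cocycles]
        gcongr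
        exact Submodule.finrank_mono hφ

end Complex

end ConeMorse

theorem betti_bound_exact_two_form_general
    {C : ℤ → Type} [∀ i, AddCommGroup (C i)] [∀ i, Module ℝ (C i)]
    [∀ i, FiniteDimensional ℝ (C i)]
    (d : ∀ i, C i →ₗ[ℝ] C (i + 1)) (hd : ∀ i, (d (i + 1)).comp (d i) = 0)
    (φ : ∀ i, C i →ₗ[ℝ] C (i + 2)) (k : ℤ)
    (hφ : Submodule.map (φ (k - 1)) (cocycles C d (k - 1)) ≤ cobound C d (k - 1 + 2)) :
    (bnum C d k : ℤ) ≤ (mnum C k : ℤ) - vnum C 2 φ (k - 1) := by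
  have v_le := vnum_le_finrank_cobound_add_finrank_cobound d 2 φ hφ
  rw [show k - 1 + 2 = k + 1 by ring, sub_add_cancel] at v_le
  have m_eq := mnum_eq_bnum_add_finrank_cobound d hd k
  lia

/-- if `ℓ = 2` and the induced map `[φ] : H^k(C) → H^{k+2}(C)` is zero for
every `k` (the algebraic model of `c(ψ)` for a d-exact two-form `ψ`), then for every
integer `k ≥ 1`, `b_k ≤ m_k − v_{k−1}`. -/
theorem betti_bound_exact_two_form
    (n ℓ : ℤ) (hn : 0 ≤ n) (hℓ : 1 ≤ ℓ)
    (C : ℤ → Type) [∀ i, AddCommGroup (C i)] [∀ i, Module ℝ (C i)]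
    [∀ i, FiniteDimensional ℝ (C i)]
    (hC : ∀ i, i < 0 ∨ n < i → Subsingleton (C i))
    (d : ∀ i, C i →ₗ[ℝ] C (i + 1))
    (hd : ∀ i, (d (i + 1)).comp (d i) = 0)
    (φ : ∀ i, C i →ₗ[ℝ] C (i + ℓ))
    (hφ : ∀ i, (d (i + ℓ)).comp (φ i) =
      ((-1 : ℝ) ^ ℓ) • (lcast C (show i + 1 + ℓ = i + ℓ + 1 by ring)).comp
        ((φ (i + 1)).comp (d i)))
    (hl2 : ℓ = 2)
    (hzero : ∀ k : ℤ, Submodule.map (φ k) (cocycles C d k) ≤ cobound C d (k + ℓ)) :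
    ∀ k : ℤ, 1 ≤ k →
      (bnum C d k : ℤ) ≤ (mnum C k : ℤ) - vnum C ℓ φ (k - 1) := by
  subst hl2
  exact fun k _ ↦ betti_bound_exact_two_form_general d hd φ k (hzero (k - 1))
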